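/- The origin (0, 0, 0, 0, 0) of ℝ×ℝ²×ℝ²×𝕊₀²×ℝ lies in 𝒰, the interior of K^co × [−1,1]. -/

import Mathlib

/-!
Midpoints of points of `K` already produce a positive and a negative multiple of every coordinate
vector. The average of `(b, v)` over both signs of `b` and of `v` leaves only the `M`-component
`v ⊗ v - I/2` (`quad_mem`), which gives the two `M`-directions. Averaging
over signs with one of `b`, `v` or `b v` held fixed isolates the `b`-, `v`- or `w`-direction up to
an `M`-component, which is cancelled by that of a vector orthogonal to `v`. Hence `K^co` contains the coordinate
segments of half-length `12/25` (`axis_mem`), and by convexity a neighbourhood of `0` in `ℝ⁷`; the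
last coordinate is handled by `0 ∈ (-1, 1)`.
-/

open Matrix

noncomputable section

/-- The constraint set `K ⊂ ℝ × ℝ² × ℝ² × 𝕊₀² ≅ ℝ⁷`, a state being flattened as
`h = (b, w₁, w₂, v₁, v₂, M₁₁, M₁₂)` with `M = ![![M₁₁, M₁₂], ![M₁₂, −M₁₁]] ∈ 𝕊₀²`:
`|b| = 1`, `|v| = 1`, `M = v ⊗ v − (1/2) I₂`, `w = b v`. -/
def K7 : Set (Fin 7 → ℝ) :=
  {h | |h 0| = 1 ∧ (h 3) ^ 2 + (h 4) ^ 2 = 1 ∧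
    h 5 = (h 3) ^ 2 - 1 / 2 ∧ h 6 = h 3 * h 4 ∧
    h 1 = h 0 * h 3 ∧ h 2 = h 0 * h 4}

/-- The relaxed set `𝒰 = int (K^co × [−1,1]) ⊂ ℝ × ℝ² × ℝ² × 𝕊₀² × ℝ ≅ ℝ⁸`. -/
def U8 : Set (Fin 8 → ℝ) :=
  interior {z | (fun i : Fin 7 => z i.castSucc) ∈ convexHull ℝ K7 ∧
    z 7 ∈ Set.Icc (-1 : ℝ) 1}

/-- The point of `K` determined by `b` and `v = (c, s)`. -/
def pt (b c s : ℝ) : Fin 7 → ℝ :=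
  ![b, b * c, b * s, c, s, c ^ 2 - 1 / 2, c * s]

lemma pt_mem {b c s : ℝ} (hb : |b| = 1) (h : c ^ 2 + s ^ 2 = 1) :
    pt b c s ∈ convexHull ℝ K7 := by
  apply subset_convexHull
  refine ⟨hb, h, ?_, ?_, ?_, ?_⟩ <;> rfl

lemma mid_mem {x y z : Fin 7 → ℝ} (hx : x ∈ convexHull ℝ K7) (hy : y ∈ convexHull ℝ K7)
    (h : ∀ i, z i = (x i + y i) / 2) : z ∈ convexHull ℝ K7 := by
  have h1 := convex_convexHull ℝ K7 hx hy (a := 1 / 2) (b := 1 / 2)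
    (by norm_num) (by norm_num) (by norm_num)
  convert h1 using 1
  ext i
  simp only [h, Pi.add_apply, Pi.smul_apply, smul_eq_mul]
  ring

/-- Averaging `K` over all signs of `b` and `v = (c, s)` leaves only the `M`-component. -/
lemma quad_mem {c s : ℝ} (h : c ^ 2 + s ^ 2 = 1) :
    ![0, 0, 0, 0, 0, c ^ 2 - 1 / 2, c * s] ∈ convexHull ℝ K7 := by
  have h' : (-c) ^ 2 + (-s) ^ 2 = 1 := by linarith [neg_sq c, neg_sq s]
  have key : ∀ b : ℝ, |b| = 1 → ![b, 0, 0, 0, 0, c ^ 2 - 1 / 2, c * s] ∈ convexHull ℝ K7 := by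
    intro b hb
    refine mid_mem (pt_mem hb h) (pt_mem hb h') fun i => ?_
    fin_cases i <;> simp [pt]
  refine mid_mem (key 1 (by simp)) (key (-1) (by simp)) fun i => ?_
  fin_cases i <;> simp

lemma b_mem {b : ℝ} (hb : |b| = 1) : ![b, 0, 0, 0, 0, 0, 0] ∈ convexHull ℝ K7 := by
  have key : ∀ c s : ℝ, c ^ 2 + s ^ 2 = 1 →
      ![b, 0, 0, 0, 0, c ^ 2 - 1 / 2, c * s] ∈ convexHull ℝ K7 := by
    intro c s h
    have h' : (-c) ^ 2 + (-s) ^ 2 = 1 := by linarith [neg_sq c, neg_sq s]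
    refine mid_mem (pt_mem hb h) (pt_mem hb h') fun i => ?_
    fin_cases i <;> simp [pt]
  refine mid_mem (key 1 0 (by norm_num)) (key 0 1 (by norm_num)) fun i => ?_
  fin_cases i <;> norm_num

lemma w_mem {c s : ℝ} (h : c ^ 2 + s ^ 2 = 1) :
    ![0, c / 2, s / 2, 0, 0, 0, 0] ∈ convexHull ℝ K7 := by
  have h' : (-c) ^ 2 + (-s) ^ 2 = 1 := by linarith [neg_sq c, neg_sq s]
  have key : ![0, c, s, 0, 0, c ^ 2 - 1 / 2, c * s] ∈ convexHull ℝ K7 := by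
    refine mid_mem (pt_mem (b := 1) (by simp) h) (pt_mem (b := -1) (by simp) h') fun i => ?_
    fin_cases i <;> simp [pt]
  -- The vector `(-s, c)` has the opposite `M`-component.
  refine mid_mem key (quad_mem (c := -s) (s := c) (by linarith [neg_sq s])) fun i => ?_
  fin_cases i <;> simp <;> linarith

lemma v_mem {c s : ℝ} (h : c ^ 2 + s ^ 2 = 1) :
    ![0, 0, 0, c / 2, s / 2, 0, 0] ∈ convexHull ℝ K7 := by
  have key : ![0, 0, 0, c, s, c ^ 2 - 1 / 2, c * s] ∈ convexHull ℝ K7 := by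
    refine mid_mem (pt_mem (b := 1) (by simp) h) (pt_mem (b := -1) (by simp) h) fun i => ?_
    fin_cases i <;> simp [pt]
  refine mid_mem key (quad_mem (c := -s) (s := c) (by linarith [neg_sq s])) fun i => ?_
  fin_cases i <;> simp <;> linarith

/-- The off-diagonal `M`-direction comes from the two rational unit vectors `(3/5, ±4/5)` and
`(4/5, ±3/5)`, whose diagonal `M`-components are opposite. -/
lemma offdiag_mem {e : ℝ} (he : e ^ 2 = 1) :
    ![0, 0, 0, 0, 0, 0, e * (12 / 25)] ∈ convexHull ℝ K7 := by
  refine mid_mem (quad_mem (c := 3 / 5) (s := e * (4 / 5)) (by rw [mul_pow, he]; norm_num))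
    (quad_mem (c := 4 / 5) (s := e * (3 / 5)) (by rw [mul_pow, he]; norm_num)) fun i => ?_
  fin_cases i <;> norm_num
  ring

lemma exists_axis (i : Fin 7) : ∃ a : ℝ, 12 / 25 ≤ a ∧
    (Pi.single i a : Fin 7 → ℝ) ∈ convexHull ℝ K7 ∧
    (Pi.single i (-a) : Fin 7 → ℝ) ∈ convexHull ℝ K7 := by
  fin_cases i
  · refine ⟨1, by norm_num, ?_, ?_⟩
    · convert b_mem (b := 1) (by simp) using 1
      ext j; fin_cases j <;> simp
    · convert b_mem (b := -1) (by simp) using 1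
      ext j; fin_cases j <;> simp
  · refine ⟨1 / 2, by norm_num, ?_, ?_⟩
    · convert w_mem (c := 1) (s := 0) (by simp) using 1
      ext j; fin_cases j <;> norm_num [Pi.single_apply]
    · convert w_mem (c := -1) (s := 0) (by simp) using 1
      ext j; fin_cases j <;> norm_num [Pi.single_apply]
  · refine ⟨1 / 2, by norm_num, ?_, ?_⟩
    · convert w_mem (c := 0) (s := 1) (by simp) using 1
      ext j; fin_cases j <;> norm_num [Pi.single_apply]
    · convert w_mem (c := 0) (s := -1) (by simp) using 1
      ext j; fin_cases j <;> norm_num [Pi.single_apply]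
  · refine ⟨1 / 2, by norm_num, ?_, ?_⟩
    · convert v_mem (c := 1) (s := 0) (by simp) using 1
      ext j; fin_cases j <;> norm_num [Pi.single_apply]
    · convert v_mem (c := -1) (s := 0) (by simp) using 1
      ext j; fin_cases j <;> norm_num [Pi.single_apply]
  · refine ⟨1 / 2, by norm_num, ?_, ?_⟩
    · convert v_mem (c := 0) (s := 1) (by simp) using 1
      ext j; fin_cases j <;> norm_num [Pi.single_apply]
    · convert v_mem (c := 0) (s := -1) (by simp) using 1
      ext j; fin_cases j <;> norm_num [Pi.single_apply]
  · refine ⟨1 / 2, by norm_num, ?_, ?_⟩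
    · convert quad_mem (c := 1) (s := 0) (by simp) using 1
      ext j; fin_cases j <;> norm_num [Pi.single_apply]
    · convert quad_mem (c := 0) (s := 1) (by simp) using 1
      ext j; fin_cases j <;> norm_num [Pi.single_apply]
  · refine ⟨12 / 25, le_rfl, ?_, ?_⟩
    · convert offdiag_mem (e := 1) (by simp) using 1
      ext j; fin_cases j <;> norm_num [Pi.single_apply]
    · convert offdiag_mem (e := -1) (by simp) using 1
      ext j; fin_cases j <;> norm_num [Pi.single_apply]

lemma axis_mem (i : Fin 7) {t : ℝ} (ht : |t| ≤ 12 / 25) :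
    (Pi.single i t : Fin 7 → ℝ) ∈ convexHull ℝ K7 := by
  obtain ⟨a, ha, hp, hm⟩ := exists_axis i
  obtain ⟨h1, h2⟩ := abs_le.mp ht
  have ha0 : 0 < a := by linarith
  have h := convex_convexHull ℝ K7 hp hm (a := (a + t) / (2 * a)) (b := (a - t) / (2 * a))
    (div_nonneg (by linarith) (by linarith)) (div_nonneg (by linarith) (by linarith))
    (by field_simp; ring)
  convert h using 1
  rw [← Pi.single_smul, ← Pi.single_smul, ← Pi.single_add]
  congr 1
  simp only [smul_eq_mul]
  field_simp
  ring

lemma box_mem {x : Fin 7 → ℝ} (hx : ∀ i, |x i| ≤ 1 / 20) : x ∈ convexHull ℝ K7 := by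
  -- `x` is the mean of the seven axis vectors `7 xᵢ eᵢ`, and `7/20 ≤ 12/25`.
  have h := (convex_convexHull ℝ K7).sum_mem (t := Finset.univ) (w := fun _ : Fin 7 => (1 / 7 : ℝ))
    (z := fun i => Pi.single i (7 * x i)) (fun _ _ => by norm_num) (by simp)
    (fun i _ => axis_mem i (by
      rw [abs_mul, abs_of_pos (by norm_num : (0 : ℝ) < 7)]
      linarith [hx i]))
  convert h using 1
  ext j
  simp [Finset.sum_apply, Pi.single_apply]

/-- The origin lies in `𝒰 = int (K^co × [−1,1])`. -/
theorem stmt_8 : (0 : Fin 8 → ℝ) ∈ U8 := by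
  rw [U8, mem_interior_iff_mem_nhds]
  filter_upwards [Metric.ball_mem_nhds (0 : Fin 8 → ℝ) (by norm_num : (0 : ℝ) < 1 / 20)] with z hz
  have hz' : ∀ i, |z i| ≤ 1 / 20 := fun i =>
    (norm_le_pi_norm z i).trans (mem_ball_zero_iff.mp hz).le
  refine ⟨box_mem fun i => hz' i.castSucc, ?_⟩
  have h := abs_le.mp (hz' 7)
  constructor <;> linarith [h.1, h.2]
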